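/- arXiv:2111.05254 — 3 statements merged into one kernel-verified Lean document; each statement's English description precedes it below -/
import Mathlib

section
/- Divergence of a boosted growing Fourier mode inside the causal wedge (core of Theorem 2). Let Γ > 0, 0 < v < 1, and γ = (1 − v²)^{-1/2}. Let P : ℝ × ℝ → ℝ be doubly periodic, i.e. there exist T₀ > 0 and L > 0 with P(t + T₀, x) = P(t, x) and P(t, x + L) = P(t, x) for all (t,x), and assume P is not identically zero. Then the function φ(t,x) := P(t,x) · exp(Γ·γ·(t − v·x)) is unbounded on the wedge D = {(t,x) ∈ ℝ² : 0 ≤ t ∧ t < x}; that is, for every M > 0 there exists (t,x) ∈ D with |φ(t,x)| > M. -/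
/-!
A nonzero value of the periodic factor recurs at every lattice translate of its location, so it
suffices to find translates in the wedge along which `t - v * x` tends to infinity. Taking `x`
within one spatial period beyond the light ray `x = t` makes `t - v * x` equal to
`(1 - v) * t` up to a bounded error, and `1 - v > 0`.
-/

open Filter Set

theorem apply_add_zsmul_add_zsmul_of_periodic {A B E : Type*} [AddGroup A] [AddGroup B]
    {P : A → B → E} {a : A} {b : B} (hPa : ∀ t x, P (t + a) x = P t x)
    (hPb : ∀ t x, P t (x + b) = P t x) (n m : ℤ) (t : A) (x : B) :
    P (t + n • a) (x + m • b) = P t x :=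
  calc
    P (t + n • a) (x + m • b) = P (t + n • a) x :=
      Function.Periodic.zsmul (hPb (t + n • a)) m x
    _ = P t x := Function.Periodic.zsmul (f := (P · x)) (hPa · x) n t

section Wedge

variable {K : Type*} [Field K] [LinearOrder K] [IsStrictOrderedRing K]

theorem eventually_forall_mem_Ioc_lt_sub_mul {v : K} (hv : v < 1) (L C : K) :
    ∀ᶠ t in atTop, ∀ x ∈ Ioc t (t + L), C < t - v * x := by
  filter_upwards [eventually_gt_atTop ((C + |v| * L) / (1 - v))] with t ht_gt x hx
  have ht : C + |v| * L < t * (1 - v) := (div_lt_iff₀ (sub_pos.mpr hv)).mp ht_gt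
  have hvx : v * (x - t) ≤ |v| * L :=
    mul_le_mul (le_abs_self v) (sub_le_iff_le_add'.mpr hx.2) (sub_nonneg.mpr hx.1.le)
      (abs_nonneg v)
  linarith

theorem exists_zsmul_translate_mem_wedge_lt_sub_mul [Archimedean K] {v T L : K} (hv : v < 1)
    (hT : 0 < T) (hL : 0 < L) (t x C : K) :
    ∃ n m : ℤ, 0 ≤ t + n • T ∧ t + n • T < x + m • L ∧
      C < t + n • T - v * (x + m • L) := by
  have translates_tendsto : Tendsto (fun n : ℤ ↦ t + n • T) atTop atTop :=
    tendsto_atTop_add_const_left _ t (tendsto_id.atTop_zsmul_const hT)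
  obtain ⟨n, hn_nonneg, hn_far⟩ := (translates_tendsto.eventually
    ((eventually_ge_atTop 0).and (eventually_forall_mem_Ioc_lt_sub_mul hv L C))).exists
  obtain ⟨m, hm, -⟩ := existsUnique_add_zsmul_mem_Ioc hL x (t + n • T)
  exact ⟨n, m, hn_nonneg, hm.1, hn_far _ hm⟩

end Wedge

section NormedSpace

variable {E : Type*} [NormedAddCommGroup E] [NormedSpace ℝ E]

theorem tendsto_norm_exp_mul_smul_atTop {κ : ℝ} (hκ : 0 < κ) {e : E} (he : e ≠ 0) :
    Tendsto (fun s ↦ ‖Real.exp (κ * s) • e‖) atTop atTop := by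
  simp only [norm_smul, Real.norm_eq_abs, Real.abs_exp]
  exact (Real.tendsto_exp_atTop.comp (tendsto_id.const_mul_atTop hκ)).atTop_mul_const
    (norm_pos_iff.mpr he)

theorem boosted_growing_mode_unbounded_on_wedge_general {κ v T₀ L : ℝ} (hκ : 0 < κ) (hv : v < 1)
    (hT₀ : 0 < T₀) (hL : 0 < L) {P : ℝ → ℝ → E} (hPt : ∀ t x, P (t + T₀) x = P t x)
    (hPx : ∀ t x, P t (x + L) = P t x) (hP : ∃ t x, P t x ≠ 0) (M : ℝ) :
    ∃ t x : ℝ, 0 ≤ t ∧ t < x ∧ M < ‖Real.exp (κ * (t - v * x)) • P t x‖ := by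
  obtain ⟨t, x, hne⟩ := hP
  obtain ⟨C, hC⟩ := eventually_atTop.mp
    ((tendsto_norm_exp_mul_smul_atTop hκ hne).eventually_gt_atTop M)
  obtain ⟨n, m, h_nonneg, h_lt, h_far⟩ :=
    exists_zsmul_translate_mem_wedge_lt_sub_mul hv hT₀ hL t x C
  refine ⟨t + n • T₀, x + m • L, h_nonneg, h_lt, ?_⟩
  rw [apply_add_zsmul_add_zsmul_of_periodic hPt hPx]
  exact hC _ h_far.le

end NormedSpace

theorem one_div_sqrt_one_sub_sq_pos {v : ℝ} (hv : |v| < 1) : 0 < 1 / Real.sqrt (1 - v ^ 2) :=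
  one_div_pos.mpr (Real.sqrt_pos.mpr (sub_pos.mpr ((sq_lt_one_iff_abs_lt_one v).mpr hv)))

/-- **Divergence of a boosted growing Fourier mode inside the causal wedge
(core of Theorem 2).** If P is doubly periodic and not identically zero, Γ > 0,
0 < v < 1 and γ = (1 − v²)^{-1/2}, then φ(t,x) = P(t,x)·exp(Γγ(t − vx)) is
unbounded on the wedge D = {(t,x) : 0 ≤ t ∧ t < x}. -/
theorem boosted_growing_mode_unbounded_on_wedge
    (Γ v γ : ℝ) (hΓ : 0 < Γ) (hv0 : 0 < v) (hv1 : v < 1)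
    (hγ : γ = 1 / Real.sqrt (1 - v ^ 2))
    (P : ℝ → ℝ → ℝ) (T₀ L : ℝ) (hT₀ : 0 < T₀) (hL : 0 < L)
    (hPt : ∀ t x : ℝ, P (t + T₀) x = P t x)
    (hPx : ∀ t x : ℝ, P t (x + L) = P t x)
    (hP : ∃ t x : ℝ, P t x ≠ 0) :
    ∀ M : ℝ, 0 < M → ∃ t x : ℝ, 0 ≤ t ∧ t < x ∧
      M < |P t x * Real.exp (Γ * γ * (t - v * x))| := by
  have hγ_pos : 0 < γ := hγ ▸ one_div_sqrt_one_sub_sq_pos (abs_lt.mpr ⟨by linarith, hv1⟩)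
  simpa only [smul_eq_mul, mul_comm (Real.exp _), Real.norm_eq_abs] using fun M (_ : 0 < M) ↦
    boosted_growing_mode_unbounded_on_wedge_general (mul_pos hΓ hγ_pos) hv1 hT₀ hL hPt hPx hP M
end

section
/- Boosted spatially homogeneous mode of the telegraph equation. Let D > 0, w > 0, let v ∈ ℝ with 0 < |v| < 1 and v²·w² ≠ 1, let γ = (1 − v²)^{-1/2}, and let Γ ∈ ℝ. The function T : ℝ² → ℝ, T(t,x) := exp(Γ·γ·(t − v·x)), satisfies the telegraph equation (1/w²)·∂_t² T + (1/D)·∂_t T = ∂_x² T at every point of ℝ² if and only if Γ = 0 or Γ = w² / (D·γ·(v²·w² − 1)). Moreover the nonzero root satisfies Γ > 0 if and only if v²·w² > 1 (i.e., the boosted telegraph equation has a growing spatially homogeneous mode exactly when the characteristic speed w is superluminal and the boost velocity exceeds 1/w). -/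
/-!
An exponential `exp (a t + b x)` is an eigenfunction of every constant-coefficient operator, so the
telegraph equation reduces to the dispersion relation `a² / w² + a / D = b²`. A mode that is
homogeneous in the boosted frame has `b = -v a`; the relation then factors as `a` times a linear
polynomial in `a`, whose root has the sign of `v² w² - 1`.
-/

open Real

/-- The telegraph equation with characteristic speed `w` and diffusivity `D`, imposed on `T t x` at
every point. The partial derivatives are Mathlib's `deriv`, which is `0` where a derivative fails to
exist, so the definition is meant for twice differentiable `T`. -/
def SolvesTelegraph (w D : ℝ) (T : ℝ → ℝ → ℝ) : Prop :=
  ∀ t x : ℝ,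
    (1 / w ^ 2) * deriv (fun s => deriv (fun s' => T s' x) s) t + (1 / D) * deriv (fun s => T s x) t
      = deriv (fun y => deriv (fun y' => T t y') y) x

/-- The growth rate, in the time of a frame boosted by `v` with Lorentz factor `γ`, of the
non-constant homogeneous mode of the telegraph equation. It is the junk value `0` when
`v ^ 2 * w ^ 2 = 1`, where no such mode exists. -/
noncomputable def boostedGrowthRate (w D v γ : ℝ) : ℝ :=
  w ^ 2 / (D * γ * (v ^ 2 * w ^ 2 - 1))

theorem deriv_exp_mul_add (a c : ℝ) :
    deriv (fun s => exp (a * s + c)) = fun s => a * exp (a * s + c) := by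
  funext s
  have affine : HasDerivAt (fun r => a * r + c) a s := by
    simpa using ((hasDerivAt_id s).const_mul a).add_const c
  rw [affine.exp.deriv, mul_comm]

theorem deriv_deriv_exp_mul_add (a c : ℝ) :
    deriv (deriv fun s => exp (a * s + c)) = fun s => a ^ 2 * exp (a * s + c) := by
  funext s
  rw [deriv_exp_mul_add, deriv_const_mul_field, deriv_exp_mul_add, sq, mul_assoc]

theorem solvesTelegraph_exp_iff (w D a b : ℝ) :
    SolvesTelegraph w D (fun t x => exp (a * t + b * x)) ↔
      1 / w ^ 2 * a ^ 2 + 1 / D * a = b ^ 2 := by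
  have pointwise (t x : ℝ) :
      (1 / w ^ 2) * deriv (deriv fun s => exp (a * s + b * x)) t
          + (1 / D) * deriv (fun s => exp (a * s + b * x)) t
        = deriv (deriv fun y => exp (a * t + b * y)) x ↔
      1 / w ^ 2 * a ^ 2 + 1 / D * a = b ^ 2 := by
    simp only [add_comm (a * t)]
    rw [deriv_deriv_exp_mul_add, deriv_deriv_exp_mul_add, deriv_exp_mul_add]
    simp only [add_comm (b * x), ← mul_assoc, ← add_mul]
    exact mul_left_inj' (exp_ne_zero _)
  exact (forall₂_congr pointwise).trans (by simp only [forall_const])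

theorem boosted_dispersion_iff {w D v γ : ℝ} (hw : w ≠ 0) (hD : D ≠ 0) (hγ : γ ≠ 0)
    (hvw : v ^ 2 * w ^ 2 ≠ 1) (Γ : ℝ) :
    1 / w ^ 2 * (Γ * γ) ^ 2 + 1 / D * (Γ * γ) = (-(Γ * γ * v)) ^ 2 ↔
      Γ = 0 ∨ Γ = boostedGrowthRate w D v γ := by
  have factorization :
      (-(Γ * γ * v)) ^ 2 - (1 / w ^ 2 * (Γ * γ) ^ 2 + 1 / D * (Γ * γ)) =
        γ / (w ^ 2 * D) * (Γ * (Γ * (D * γ * (v ^ 2 * w ^ 2 - 1)) - w ^ 2)) := by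
    field_simp
    ring
  have prefactor_ne_zero : γ / (w ^ 2 * D) ≠ 0 := by positivity
  have denominator_ne_zero : D * γ * (v ^ 2 * w ^ 2 - 1) ≠ 0 :=
    mul_ne_zero (mul_ne_zero hD hγ) (sub_ne_zero.mpr hvw)
  rw [eq_comm, ← sub_eq_zero, factorization, mul_eq_zero_iff_left prefactor_ne_zero, mul_eq_zero,
    sub_eq_zero, boostedGrowthRate, eq_div_iff denominator_ne_zero]

theorem solvesTelegraph_boosted_exp_iff {w D v γ : ℝ} (hw : w ≠ 0) (hD : D ≠ 0) (hγ : γ ≠ 0)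
    (hvw : v ^ 2 * w ^ 2 ≠ 1) (Γ : ℝ) :
    SolvesTelegraph w D (fun t x => exp (Γ * γ * (t - v * x))) ↔
      Γ = 0 ∨ Γ = boostedGrowthRate w D v γ := by
  have phase (t x : ℝ) : Γ * γ * (t - v * x) = Γ * γ * t + -(Γ * γ * v) * x := by ring
  simp only [phase]
  rw [solvesTelegraph_exp_iff, boosted_dispersion_iff hw hD hγ hvw]

theorem boostedGrowthRate_pos_iff {w D v γ : ℝ} (hw : w ≠ 0) (hDγ : 0 < D * γ) :
    0 < boostedGrowthRate w D v γ ↔ 1 < v ^ 2 * w ^ 2 := by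
  rw [boostedGrowthRate, div_pos_iff_of_pos_left (by positivity), mul_pos_iff_of_pos_left hDγ,
    sub_pos]

theorem lorentzFactor_pos {v : ℝ} (hv : |v| < 1) : 0 < 1 / √(1 - v ^ 2) :=
  one_div_pos.mpr (sqrt_pos.mpr (sub_pos.mpr ((sq_lt_one_iff_abs_lt_one v).mpr hv)))

/-- **Boosted spatially homogeneous mode of the telegraph equation.** The function
T(t,x) = exp(Γγ(t − vx)) (a zero-wavenumber Fourier mode in the boosted frame)
solves the telegraph equation (1/w²)∂_t²T + (1/D)∂_tT = ∂_x²T everywhere if and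
only if Γ = 0 or Γ = w²/(Dγ(v²w² − 1)); and the nonzero root is positive exactly
when v²w² > 1. -/
theorem boosted_telegraph_mode
    (D w v γ Γ : ℝ) (hD : 0 < D) (hw : 0 < w) (hv0 : 0 < |v|) (hv1 : |v| < 1)
    (hvw : v ^ 2 * w ^ 2 ≠ 1)
    (hγ : γ = 1 / Real.sqrt (1 - v ^ 2))
    (T : ℝ → ℝ → ℝ)
    (hT : T = fun t x => Real.exp (Γ * γ * (t - v * x))) :
    ((∀ t x : ℝ,
        (1 / w ^ 2) * deriv (fun s => deriv (fun s' => T s' x) s) t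
            + (1 / D) * deriv (fun s => T s x) t
          = deriv (fun y => deriv (fun y' => T t y') y) x)
      ↔ (Γ = 0 ∨ Γ = w ^ 2 / (D * γ * (v ^ 2 * w ^ 2 - 1))))
    ∧ (0 < w ^ 2 / (D * γ * (v ^ 2 * w ^ 2 - 1)) ↔ 1 < v ^ 2 * w ^ 2) := by
  have hγ_pos : 0 < γ := hγ ▸ lorentzFactor_pos hv1
  subst hT
  exact ⟨solvesTelegraph_boosted_exp_iff hw.ne' hD.ne' hγ_pos.ne' hvw Γ,
    boostedGrowthRate_pos_iff hw.ne' (mul_pos hD hγ_pos)⟩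
end

section
/- Blow-up of the boosted heat-kernel as t → 0⁻ (Section IV.A, figure 6): the boosted heat equation anti-diffuses. Let D > 0, 0 < v < 1, γ = (1 − v²)^{-1/2}, and define F : ℝ² → ℝ by F(t,x) := (4π·D·γ·(t + v·x))^{-1/2} · exp(−γ·(x + v·t)² / (4·D·(t + v·x))) when t + v·x > 0, and F(t,x) := 0 when t + v·x ≤ 0. Then for every M > 0 there exists δ > 0 such that for every t ∈ (−δ, 0) there exists x ∈ ℝ with F(t,x) > M; that is, the supremum over x of F(t, x) tends to +∞ as t tends to 0 from below. -/
/-!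
Along a ray `x = c * t` the Gaussian exponent of the heat kernel is linear in `t`, so as `t → 0⁺`
the exponential tends to `1` while the prefactor `(4πDt)^(-1/2)` diverges. For `v ≠ 0` the boosted
observer's half-plane `t < 0` contains such a ray of Alice's: on `x = -2t/v` her time is
`t_A = -γt > 0` and her position is `x_A = (2/v - v) t_A`, so the blow-up is seen as `t → 0⁻`.
-/

open Filter Real Topology

/-- The retarded Green's function of the heat equation `∂ₜT = D ∂ₓ²T` on the line, with the spike
injected at the origin; it is extended by zero to `t ≤ 0`. -/
noncomputable def heatKernel (D t x : ℝ) : ℝ :=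
  if 0 < t then 1 / √(4 * π * D * t) * exp (-x ^ 2 / (4 * D * t)) else 0

/-- The Lorentz factor `γ` of a boost with velocity `v`, in units where the speed of light is `1`.
It takes the junk value `0` for `1 ≤ |v|`. -/
noncomputable def lorentzFactor (v : ℝ) : ℝ := 1 / √(1 - v ^ 2)

/-- The heat kernel in the coordinates `(t, x)` of an observer boosted with velocity `v`, for whom
the rest frame of the medium has coordinates `t_A = γ(t + vx)` and `x_A = γ(x + vt)`. -/
noncomputable def boostedHeatKernel (D v t x : ℝ) : ℝ :=
  heatKernel D (lorentzFactor v * (t + v * x)) (lorentzFactor v * (x + v * t))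

section

variable {D v : ℝ}

lemma heatKernel_ray (c : ℝ) {t : ℝ} (ht : 0 < t) :
    heatKernel D t (c * t) = 1 / √(4 * π * D * t) * exp (-(c ^ 2 / (4 * D)) * t) := by
  have exponent_eq : -(c * t) ^ 2 / (4 * D * t) = -(c ^ 2 / (4 * D)) * t := by
    field_simp
  rw [heatKernel, if_pos ht, exponent_eq]

lemma tendsto_one_div_sqrt_mul_nhdsGT_zero {a : ℝ} (ha : 0 < a) :
    Tendsto (fun t ↦ 1 / √(a * t)) (𝓝[>] 0) atTop := by
  have sqrt_tendsto : Tendsto (fun t ↦ √(a * t)) (𝓝[>] 0) (𝓝[>] 0) := by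
    refine tendsto_nhdsWithin_iff.2 ⟨?_, ?_⟩
    · exact (Continuous.tendsto' (by fun_prop) 0 0 (by simp)).mono_left nhdsWithin_le_nhds
    · filter_upwards [self_mem_nhdsWithin] with t ht
      exact sqrt_pos.2 (mul_pos ha ht)
  simpa only [one_div, Function.comp_def] using tendsto_inv_nhdsGT_zero.comp sqrt_tendsto

lemma tendsto_heatKernel_ray (hD : 0 < D) (c : ℝ) :
    Tendsto (fun t ↦ heatKernel D t (c * t)) (𝓝[>] 0) atTop := by
  have exp_tendsto : Tendsto (fun t ↦ exp (-(c ^ 2 / (4 * D)) * t)) (𝓝[>] 0) (𝓝 1) :=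
    (Continuous.tendsto' (by fun_prop) 0 1 (by simp)).mono_left nhdsWithin_le_nhds
  have prefactor_tendsto : Tendsto (fun t ↦ 1 / √(4 * π * D * t)) (𝓝[>] 0) atTop :=
    tendsto_one_div_sqrt_mul_nhdsGT_zero (by positivity)
  refine (prefactor_tendsto.atTop_mul_pos one_pos exp_tendsto).congr' ?_
  filter_upwards [self_mem_nhdsWithin] with t ht
  exact (heatKernel_ray c ht).symm

lemma lorentzFactor_pos_s13 (hv : |v| < 1) : 0 < lorentzFactor v :=
  one_div_pos.2 (sqrt_pos.2 (sub_pos.2 ((sq_lt_one_iff_abs_lt_one v).2 hv)))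

lemma boostedHeatKernel_eq_ite (hv : |v| < 1) (t x : ℝ) :
    boostedHeatKernel D v t x =
      if 0 < t + v * x then
        1 / √(4 * π * D * lorentzFactor v * (t + v * x)) *
          exp (-(lorentzFactor v * (x + v * t) ^ 2) / (4 * D * (t + v * x)))
      else 0 := by
  have hγ : 0 < lorentzFactor v := lorentzFactor_pos_s13 hv
  have exponent_eq : -(lorentzFactor v * (x + v * t)) ^ 2 /
      (4 * D * (lorentzFactor v * (t + v * x))) =
        -(lorentzFactor v * (x + v * t) ^ 2) / (4 * D * (t + v * x)) := by
    field_simp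
  rw [boostedHeatKernel, heatKernel, exponent_eq, mul_assoc _ (lorentzFactor v)]
  simp only [mul_pos_iff_of_pos_left hγ]

lemma boostedHeatKernel_ray (hv : v ≠ 0) (t : ℝ) :
    boostedHeatKernel D v t (-2 * t / v) =
      heatKernel D (lorentzFactor v * -t) ((2 / v - v) * (lorentzFactor v * -t)) := by
  have time_eq : t + v * (-2 * t / v) = -t := by
    field_simp
    ring
  have position_eq : -2 * t / v + v * t = (2 / v - v) * -t := by ring
  rw [boostedHeatKernel, time_eq, position_eq, mul_left_comm]

lemma tendsto_boostedHeatKernel_ray (hD : 0 < D) (hv0 : v ≠ 0) (hv1 : |v| < 1) :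
    Tendsto (fun t ↦ boostedHeatKernel D v t (-2 * t / v)) (𝓝[<] 0) atTop := by
  have time_tendsto : Tendsto (fun t ↦ lorentzFactor v * -t) (𝓝[<] 0) (𝓝[>] 0) := by
    refine tendsto_nhdsWithin_iff.2 ⟨?_, ?_⟩
    · exact (Continuous.tendsto' (by fun_prop) 0 0 (by simp)).mono_left nhdsWithin_le_nhds
    · filter_upwards [self_mem_nhdsWithin] with t ht
      exact mul_pos (lorentzFactor_pos_s13 hv1) (neg_pos.2 ht)
  simpa only [boostedHeatKernel_ray hv0, Function.comp_def] using
    (tendsto_heatKernel_ray hD (2 / v - v)).comp time_tendsto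

end

theorem boosted_heat_kernel_blowup_general
    (D v γ : ℝ) (hD : 0 < D) (hv0 : v ≠ 0) (hv1 : |v| < 1)
    (hγ : γ = 1 / √(1 - v ^ 2))
    (F : ℝ → ℝ → ℝ)
    (hF : ∀ t x : ℝ, F t x =
      if 0 < t + v * x then
        (1 / √(4 * π * D * γ * (t + v * x)))
          * exp (-(γ * (x + v * t) ^ 2) / (4 * D * (t + v * x)))
      else 0) (M : ℝ) :
    ∃ δ : ℝ, 0 < δ ∧ ∀ t ∈ Set.Ioo (-δ) (0 : ℝ), ∃ x : ℝ, M < F t x := by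
  obtain rfl : γ = lorentzFactor v := hγ
  have F_eq (t x : ℝ) : F t x = boostedHeatKernel D v t x :=
    (hF t x).trans (boostedHeatKernel_eq_ite hv1 t x).symm
  have eventually_lt : ∀ᶠ t in 𝓝[<] 0, M < F t (-2 * t / v) := by
    simpa only [F_eq] using (tendsto_boostedHeatKernel_ray hD hv0 hv1).eventually_gt_atTop M
  obtain ⟨l, hl, lt_on_Ioo⟩ := mem_nhdsLT_iff_exists_Ioo_subset.1 eventually_lt
  refine ⟨-l, neg_pos.2 hl, fun t ht ↦ ⟨-2 * t / v, lt_on_Ioo ?_⟩⟩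
  rwa [neg_neg] at ht

/-- **Blow-up of the boosted heat-kernel as t → 0⁻** (Section IV.A, figure 6):
the boosted heat equation anti-diffuses. The boosted retarded Green's function
F (extended by zero to t + vx ≤ 0) has sup_x F(t,x) → +∞ as t → 0⁻: for every
M > 0 there is δ > 0 such that for every t ∈ (−δ, 0) some x has F(t,x) > M. -/
theorem boosted_heat_kernel_blowup
    (D v γ : ℝ) (hD : 0 < D) (hv0 : 0 < v) (hv1 : v < 1)
    (hγ : γ = 1 / Real.sqrt (1 - v ^ 2))
    (F : ℝ → ℝ → ℝ)
    (hF : ∀ t x : ℝ, F t x =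
      if 0 < t + v * x then
        (1 / Real.sqrt (4 * Real.pi * D * γ * (t + v * x)))
          * Real.exp (-(γ * (x + v * t) ^ 2) / (4 * D * (t + v * x)))
      else 0) :
    ∀ M : ℝ, 0 < M → ∃ δ : ℝ, 0 < δ ∧
      ∀ t ∈ Set.Ioo (-δ) (0 : ℝ), ∃ x : ℝ, M < F t x := by
  exact fun M _ ↦ boosted_heat_kernel_blowup_general D v γ hD hv0.ne'
    (abs_lt.2 ⟨by linarith, hv1⟩) hγ F hF M
end
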